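/- arXiv:1510.01901 — 4 statements merged into one kernel-verified Lean document; each statement's English description precedes it below -/
import Mathlib

section
/- For any pair of positive integers a and b, if there are only finitely many n ∈ ℕ for which ζ(an+b) is irrational, then the sequence {q_n} of common denominators grows super-exponentially: q_n^{1/n} → ∞ as n → ∞. (Equivalently: either infinitely many of the values ζ(an+b), n ∈ ℕ, are irrational, or q_n^{1/n} → ∞.) -/
open Filter Polynomial in
theorem hz_lower (a b : ℕ) (ha : 0 < a) (hb : 0 < b) (N r n d : ℕ) (hN : N + r + 1 ≤ n)
    (hd : ∀ k : ℕ, N < k → k ≤ n → ∃ z : ℤ, (d : ℝ) * (∑' m : ℕ, 1 / (m : ℝ) ^ (a * k + b)) = z)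
    (hd0 : 0 < d) :
    ((r : ℝ) + 1) ^ (n - r - 1) ≤ d * ∑' m : ℕ, 1 / (m : ℝ) ^ 2 := by
  obtain ⟨L, rfl⟩ : ∃ L, n = L + 1 + r := ⟨n - r - 1, by omega⟩
  have e1 : L + 1 + r - r - 1 = L := by omega
  rw [e1]
  let P : ℤ[X] := ∏ j ∈ Finset.range r, (1 - C (((j : ℤ) + 1) ^ a) * X)
  have hdeg : P.natDegree < r + 1 := by
    refine Nat.lt_succ_of_le ((natDegree_prod_le _ _).trans ?_)
    calc _ ≤ ∑ j ∈ Finset.range r, 1 := by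
          refine Finset.sum_le_sum fun j _ => ?_
          refine (natDegree_sub_le _ _).trans ?_
          simp only [natDegree_one, zero_le, sup_of_le_right]
          exact (natDegree_C_mul_le _ _).trans natDegree_X_le
      _ = r := by simp
  have hev : ∀ x : ℝ, aeval x P = ∏ j ∈ Finset.range r, (1 - ((j : ℝ) + 1) ^ a * x) := by
    intro x
    simp [P, map_prod]
  have hsm : ∀ k : ℕ, Summable (fun m : ℕ => 1 / (m : ℝ) ^ (a * (L + 1 + k) + b)) := by
    intro k
    refine Real.summable_one_div_nat_pow.2 ?_
    nlinarith [Nat.zero_le (a * L), Nat.zero_le (a * k)]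
  have hV := hasSum_sum (s := Finset.range (r + 1)) (fun k _ =>
    ((hsm k).hasSum.mul_left ((P.coeff k : ℤ) : ℝ)))
  have hterm : ∀ m : ℕ, ∑ k ∈ Finset.range (r + 1),
      ((P.coeff k : ℤ) : ℝ) * (1 / (m : ℝ) ^ (a * (L + 1 + k) + b))
      = 1 / (m : ℝ) ^ (a * (L + 1) + b) *
        ∏ j ∈ Finset.range r, (1 - ((j : ℝ) + 1) ^ a * (1 / (m : ℝ) ^ a)) := by
    intro m
    rw [← hev, aeval_eq_sum_range' hdeg, Finset.mul_sum]
    refine Finset.sum_congr rfl fun k _ => ?_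
    rw [zsmul_eq_mul, one_div_pow, ← pow_mul]
    have : a * (L + 1 + k) + b = (a * (L + 1) + b) + a * k := by ring
    rw [this, pow_add, ← one_div_mul_one_div]
    ring
  simp only [hterm] at hV
  set V := ∑ k ∈ Finset.range (r + 1),
    ((P.coeff k : ℤ) : ℝ) * ∑' m : ℕ, 1 / (m : ℝ) ^ (a * (L + 1 + k) + b) with hVdef
  have hint : ∃ z : ℤ, (d : ℝ) * V = z := by
    have : ∀ k ∈ Finset.range (r + 1), ∃ z : ℤ,
        (d : ℝ) * (∑' m : ℕ, 1 / (m : ℝ) ^ (a * (L + 1 + k) + b)) = z := by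
      intro k hk
      have := Finset.mem_range.1 hk
      exact hd _ (by omega) (by omega)
    choose! z hz using this
    refine ⟨∑ k ∈ Finset.range (r + 1), P.coeff k * z k, ?_⟩
    rw [hVdef, Finset.mul_sum]
    push_cast
    refine Finset.sum_congr rfl fun k hk => ?_
    rw [← hz k hk]; ring
  -- factors
  have hzero : ∀ m : ℕ, m ≤ r → 1 / (m : ℝ) ^ (a * (L + 1) + b) *
        ∏ j ∈ Finset.range r, (1 - ((j : ℝ) + 1) ^ a * (1 / (m : ℝ) ^ a)) = 0 := by
    intro m hm
    rcases Nat.eq_zero_or_pos m with rfl | h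
    · simp [hb.ne']
    · apply mul_eq_zero_of_right
      refine Finset.prod_eq_zero (i := m - 1) (Finset.mem_range.2 (by omega)) ?_
      have : ((m - 1 : ℕ) : ℝ) + 1 = m := by exact_mod_cast Nat.sub_add_cancel h
      have h' : (m : ℝ) ≠ 0 := by positivity
      rw [this]; field_simp; simp
  have hfac : ∀ m : ℕ, r < m → ∀ j ∈ Finset.range r,
      0 < 1 - ((j : ℝ) + 1) ^ a * (1 / (m : ℝ) ^ a) ∧
      1 - ((j : ℝ) + 1) ^ a * (1 / (m : ℝ) ^ a) ≤ 1 := by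
    intro m hm j hj
    have hj := Finset.mem_range.1 hj
    have hm0 : (0 : ℝ) < m := by exact_mod_cast (by omega : 0 < m)
    have h1 : ((j : ℝ) + 1) < m := by exact_mod_cast (by omega : j + 1 < m)
    have h2 : ((j : ℝ) + 1) ^ a < (m : ℝ) ^ a := pow_lt_pow_left₀ h1 (by positivity) ha.ne'
    constructor
    · rw [mul_one_div, sub_pos, div_lt_one (by positivity)]; exact h2
    · have : 0 ≤ ((j : ℝ) + 1) ^ a * (1 / (m : ℝ) ^ a) := by positivity
      linarith
  have hpos : ∀ m : ℕ, r < m → 0 < 1 / (m : ℝ) ^ (a * (L + 1) + b) *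
        ∏ j ∈ Finset.range r, (1 - ((j : ℝ) + 1) ^ a * (1 / (m : ℝ) ^ a)) := by
    intro m hm
    have hm0 : (0 : ℝ) < m := by exact_mod_cast (by omega : 0 < m)
    exact mul_pos (by positivity) (Finset.prod_pos fun j hj => (hfac m hm j hj).1)
  have hVpos : 0 < V := by
    refine lt_of_lt_of_le (hpos (r + 1) (by omega)) (le_hasSum hV (r + 1) fun m _ => ?_)
    rcases le_or_gt m r with h | h
    · exact (hzero m h).ge
    · exact (hpos m h).le
  have hs2 : Summable (fun m : ℕ => 1 / (m : ℝ) ^ 2) := Real.summable_one_div_nat_pow.2 (by norm_num)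
  have hVle : V ≤ (1 / ((r : ℝ) + 1) ^ L) * ∑' m : ℕ, 1 / (m : ℝ) ^ 2 := by
    refine hasSum_le (fun m => ?_) hV (hs2.hasSum.mul_left _)
    rcases le_or_gt m r with h | h
    · rw [hzero m h]; positivity
    · have hm1 : (1 : ℝ) ≤ m := by exact_mod_cast (by omega : 1 ≤ m)
      have hm0 : (0 : ℝ) < m := by linarith
      have hrm : (r : ℝ) + 1 ≤ m := by exact_mod_cast h
      have h3 : ∏ j ∈ Finset.range r, (1 - ((j : ℝ) + 1) ^ a * (1 / (m : ℝ) ^ a)) ≤ 1 :=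
        Finset.prod_le_one (fun j hj => (hfac m h j hj).1.le) (fun j hj => (hfac m h j hj).2)
      refine (mul_le_of_le_one_right (by positivity) h3).trans ?_
      rw [one_div_mul_one_div]
      refine one_div_le_one_div_of_le (by positivity) ?_
      calc ((r : ℝ) + 1) ^ L * (m : ℝ) ^ 2 ≤ (m : ℝ) ^ L * (m : ℝ) ^ 2 := by gcongr
        _ = (m : ℝ) ^ (L + 2) := by ring
        _ ≤ _ := pow_le_pow_right₀ hm1 (by nlinarith)
  obtain ⟨z, hz⟩ := hint
  have hd0' : (0 : ℝ) < d := by exact_mod_cast hd0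
  have hz1 : (1 : ℝ) ≤ d * V := by
    have : (0 : ℝ) < z := hz ▸ mul_pos hd0' hVpos
    rw [hz]
    exact_mod_cast (by exact_mod_cast this : (0 : ℤ) < z)
  have h4 : (1 : ℝ) ≤ d * ((1 / ((r : ℝ) + 1) ^ L) * ∑' m : ℕ, 1 / (m : ℝ) ^ 2) :=
    hz1.trans (by gcongr)
  have h5 : (0 : ℝ) < ((r : ℝ) + 1) ^ L := by positivity
  calc ((r : ℝ) + 1) ^ L = ((r : ℝ) + 1) ^ L * 1 := by ring
    _ ≤ ((r : ℝ) + 1) ^ L * (d * ((1 / ((r : ℝ) + 1) ^ L) * ∑' m : ℕ, 1 / (m : ℝ) ^ 2)) := by gcongr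
    _ = _ := by field_simp

theorem hz_real (k : ℕ) (hk : 1 < k) :
    riemannZeta (k : ℂ) = ((∑' m : ℕ, 1 / (m : ℝ) ^ k : ℝ) : ℂ) := by
  rw [zeta_nat_eq_tsum_of_gt_one hk]
  push_cast
  rfl

/-- **Theorem 1** (Haynes–Zudilin). For positive integers `a` and `b`, if only finitely
many of the values `ζ(an+b)` (for `n ≥ 1`) are irrational, then the sequence `q n` of
common denominators of the rational elements of `{ζ(a+b), ζ(2a+b), …, ζ(an+b)}` grows
super-exponentially: `(q n)^(1/n) → ∞` as `n → ∞`. -/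
theorem hankel_zeta_superexponential_denominators
    (a b : ℕ) (ha : 0 < a) (hb : 0 < b)
    (hfin : {n : ℕ | 0 < n ∧ ¬ ∃ r : ℚ, riemannZeta ((a * n + b : ℕ) : ℂ) = (r : ℂ)}.Finite)
    (q : ℕ → ℕ)
    (hq : ∀ n : ℕ, IsLeast {d : ℕ | 0 < d ∧ ∀ k : ℕ, 1 ≤ k → k ≤ n →
        (∃ r : ℚ, riemannZeta ((a * k + b : ℕ) : ℂ) = (r : ℂ)) →
        ∃ z : ℤ, (d : ℂ) * riemannZeta ((a * k + b : ℕ) : ℂ) = (z : ℂ)} (q n)) :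
    Filter.Tendsto (fun n : ℕ => (q n : ℝ) ^ ((n : ℝ)⁻¹)) Filter.atTop Filter.atTop := by
  obtain ⟨N, hN⟩ := hfin.bddAbove
  have hlow : ∀ r n : ℕ, N + r + 1 ≤ n →
      ((r : ℝ) + 1) ^ (n - r - 1) ≤ q n * ∑' m : ℕ, 1 / (m : ℝ) ^ 2 := by
    intro r n hn
    obtain ⟨h0, h1⟩ := (hq n).1
    refine hz_lower a b ha hb N r n (q n) hn (fun k hk hkn => ?_) h0
    have hr : ∃ r : ℚ, riemannZeta ((a * k + b : ℕ) : ℂ) = (r : ℂ) := by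
      by_contra hc
      have := hN (show k ∈ _ from ⟨by omega, hc⟩)
      omega
    obtain ⟨z, hz⟩ := h1 k (by omega) hkn hr
    have hk1 : 1 < a * k + b := by
      have : 0 < a * k := Nat.mul_pos ha (by omega)
      omega
    rw [hz_real _ hk1] at hz
    exact ⟨z, by exact_mod_cast hz⟩
  set K : ℝ := ∑' m : ℕ, 1 / (m : ℝ) ^ 2
  rw [Filter.tendsto_atTop]
  intro B
  obtain ⟨r, hr⟩ := exists_nat_gt (max B 1)
  have hrB : B < r := (le_max_left _ _).trans_lt hr
  have hr1 : (1 : ℝ) < r := (le_max_right _ _).trans_lt hr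
  have hr0 : (0 : ℝ) < r := by linarith
  have hgt : (1 : ℝ) < ((r : ℝ) + 1) / r := by rw [lt_div_iff₀ hr0]; linarith
  have ht := (tendsto_pow_atTop_atTop_of_one_lt hgt).eventually_ge_atTop
    (K * ((r : ℝ) + 1) ^ (r + 1))
  filter_upwards [ht, Filter.eventually_ge_atTop (N + r + 1)] with n h1 h2
  have hl := hlow r n h2
  have hK : 0 < K := by
    have h3 : (0 : ℝ) < ((r : ℝ) + 1) ^ (n - r - 1) := by positivity
    have h4 : (0 : ℝ) ≤ q n := Nat.cast_nonneg _
    by_contra hc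
    nlinarith [mul_nonneg h4 (sub_nonneg.2 (not_lt.1 hc))]
  have hqn : (r : ℝ) ^ n ≤ q n := by
    rw [div_pow, le_div_iff₀ (by positivity)] at h1
    have e : ((r : ℝ) + 1) ^ n = ((r : ℝ) + 1) ^ (n - r - 1) * ((r : ℝ) + 1) ^ (r + 1) := by
      rw [← pow_add]; congr 1; omega
    rw [e] at h1
    have hp : (0 : ℝ) < ((r : ℝ) + 1) ^ (r + 1) := by positivity
    have h5 : (K * (r : ℝ) ^ n) * ((r : ℝ) + 1) ^ (r + 1)
        ≤ ((r : ℝ) + 1) ^ (n - r - 1) * ((r : ℝ) + 1) ^ (r + 1) := by linarith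
    have h6 := (le_of_mul_le_mul_right h5 hp).trans hl
    rw [mul_comm] at h6
    exact le_of_mul_le_mul_right h6 hK
  refine hrB.le.trans ?_
  have hn0 : n ≠ 0 := by omega
  calc (r : ℝ) = ((r : ℝ) ^ n) ^ ((n : ℝ)⁻¹) := (Real.pow_rpow_inv_natCast hr0.le hn0).symm
    _ ≤ _ := Real.rpow_le_rpow (by positivity) hqn (by positivity)
end

section
/- For any positive integers a and b there exists a constant C' > 0 such that for all sufficiently large n, log|det_{1≤i,j≤n}(ζ(a(i+j)+b))| ≤ -(a/2)·n²·log n + C'·n². -/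
noncomputable section HankelAux

open Polynomial

def hx (a k : ℕ) : ℝ := (((k : ℝ) + 1) ^ a)⁻¹

def hH (a b n : ℕ) : Matrix (Fin n) (Fin n) ℝ :=
  Matrix.of fun i j => ∑' k : ℕ, hx (2 * a + b) k * (hx a k ^ (i : ℕ) * hx a k ^ (j : ℕ))

lemma hx_pos (a k : ℕ) : 0 < hx a k := by unfold hx; positivity

lemma hx_le_one (a k : ℕ) : hx a k ≤ 1 := by
  unfold hx
  apply inv_le_one_of_one_le₀
  apply one_le_pow₀
  have : (0 : ℝ) ≤ k := by positivity
  linarith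

lemma hx_anti (a : ℕ) {i k : ℕ} (h : i ≤ k) : hx a k ≤ hx a i := by
  unfold hx
  have : (i : ℝ) ≤ k := by exact_mod_cast h
  gcongr

lemma hx_inj {a : ℕ} (ha : 0 < a) : Function.Injective (hx a) := by
  intro i j h
  unfold hx at h
  rw [inv_inj] at h
  have := (pow_left_inj₀ (by positivity) (by positivity) ha.ne').1 h
  exact_mod_cast (add_right_cancel this)

lemma hx_summable {s : ℕ} (hs : 1 < s) : Summable (hx s) := by
  have h := (summable_nat_add_iff 1).2 (Real.summable_nat_pow_inv.2 hs)
  have e : hx s = fun k : ℕ => (((k + 1 : ℕ) : ℝ) ^ s)⁻¹ := by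
    funext k
    simp [hx]
  rw [e]
  exact h

lemma hx_term_summable {a b : ℕ} (ha : 0 < a) (hb : 0 < b) (i j : ℕ) :
    Summable fun k => hx (2 * a + b) k * (hx a k ^ i * hx a k ^ j) := by
  refine Summable.of_nonneg_of_le (fun k => ?_) (fun k => ?_) (hx_summable (s := 2 * a + b) (by omega))
  · have := hx_pos a k
    have := hx_pos (2 * a + b) k
    positivity
  · have h1 := hx_pos a k
    have h3 := hx_le_one a k
    have h2 := hx_pos (2 * a + b) k
    have h4 : hx a k ^ i ≤ 1 := pow_le_one₀ h1.le h3
    have h5 : hx a k ^ j ≤ 1 := pow_le_one₀ h1.le h3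
    have h6 : hx a k ^ i * hx a k ^ j ≤ 1 := mul_le_one₀ h4 (by positivity) h5
    exact mul_le_of_le_one_right h2.le h6

lemma hH_bilin {a b : ℕ} (ha : 0 < a) (hb : 0 < b) (n : ℕ) (u v : Fin n → ℝ) :
    HasSum (fun k => hx (2 * a + b) k * ((∑ i, u i * hx a k ^ (i : ℕ)) * (∑ j, v j * hx a k ^ (j : ℕ))))
      (∑ i, ∑ j, u i * hH a b n i j * v j) := by
  have h : HasSum (fun k => ∑ i : Fin n, ∑ j : Fin n,
      u i * (hx (2 * a + b) k * (hx a k ^ (i : ℕ) * hx a k ^ (j : ℕ))) * v j)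
      (∑ i, ∑ j, u i * hH a b n i j * v j) := by
    refine hasSum_sum fun i _ => hasSum_sum fun j _ => ?_
    exact ((hx_term_summable ha hb i j).hasSum.mul_left _).mul_right _
  convert h using 2 with k
  rw [Finset.sum_mul_sum, Finset.mul_sum]
  refine Finset.sum_congr rfl fun i _ => ?_
  rw [Finset.mul_sum]
  refine Finset.sum_congr rfl fun j _ => ?_
  ring

lemma hH_det_ne {a b : ℕ} (ha : 0 < a) (hb : 0 < b) (n : ℕ) : (hH a b n).det ≠ 0 := by
  intro h0
  obtain ⟨v, hv, hMv⟩ := Matrix.exists_mulVec_eq_zero_iff.2 h0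
  have h := hH_bilin ha hb n v v
  have hz : ∑ i, ∑ j, v i * hH a b n i j * v j = 0 := by
    refine Finset.sum_eq_zero fun i _ => ?_
    have := congrFun hMv i
    simp only [Matrix.mulVec, dotProduct, Pi.zero_apply] at this
    simp only [mul_assoc]
    rw [← Finset.mul_sum, this, mul_zero]
  rw [hz] at h
  have h2 := (hasSum_zero_iff_of_nonneg (fun k => by
    exact mul_nonneg (hx_pos _ _).le (mul_self_nonneg _))).1 h
  have h3 : ∀ k, ∑ i, v i * hx a k ^ (i : ℕ) = 0 := by
    intro k
    have := congrFun h2 k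
    simpa [(hx_pos (2 * a + b) k).ne'] using this
  apply hv
  have h4 := Matrix.eq_zero_of_forall_index_sum_pow_mul_eq_zero (v := v) (f := fun i : Fin n => hx a i)
    (fun i j hij => Fin.ext (hx_inj ha hij))
  apply h4
  intro j
  rw [← h3 j]
  exact Finset.sum_congr rfl fun i _ => mul_comm _ _

def hp (a l : ℕ) : ℝ[X] := ∏ i ∈ Finset.range l, (X - C (hx a i))

lemma hp_monic (a l : ℕ) : (hp a l).Monic := monic_prod_X_sub_C _ _

lemma hp_natDegree (a l : ℕ) : (hp a l).natDegree = l := by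
  unfold hp
  rw [natDegree_prod_of_monic _ _ (fun i _ => monic_X_sub_C _)]
  simp

lemma hp_eval_bound (a l k : ℕ) : |(hp a l).eval (hx a k)| ≤ hx a 0 * ((l.factorial : ℝ) ^ a)⁻¹ := by
  have e0 : hx a 0 = 1 := by simp [hx]
  rw [e0, one_mul]
  by_cases hk : k < l
  · have : (hp a l).eval (hx a k) = 0 := by
      unfold hp
      rw [eval_prod]
      exact Finset.prod_eq_zero (Finset.mem_range.2 hk) (by simp)
    rw [this, abs_zero]
    positivity
  · have e1 : ((l.factorial : ℝ) ^ a)⁻¹ = ∏ i ∈ Finset.range l, hx a i := by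
      unfold hx
      rw [Finset.prod_inv_distrib, Finset.prod_pow, ← Finset.prod_range_add_one_eq_factorial]
      push_cast
      rfl
    rw [e1]
    unfold hp
    rw [eval_prod, Finset.abs_prod]
    refine Finset.prod_le_prod (fun _ _ => abs_nonneg _) fun i hi => ?_
    have := hx_anti a (show i ≤ k by have := Finset.mem_range.1 hi; omega)
    have := hx_pos a k
    have := hx_pos a i
    simp only [eval_sub, eval_X, eval_C]
    rw [abs_le]
    constructor <;> linarith

lemma hp_eval_sum (a n : ℕ) (l : Fin n) (x : ℝ) :
    ∑ i : Fin n, (hp a l).coeff i * x ^ (i : ℕ) = (hp a l).eval x := by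
  rw [eval_eq_sum_range' (n := n) (by rw [hp_natDegree]; exact l.2),
    Fin.sum_univ_eq_sum_range (fun i => (hp a l).coeff i * x ^ i)]

lemma hH_det_le {a b : ℕ} (ha : 0 < a) (hb : 0 < b) (n : ℕ) :
    |(hH a b n).det| ≤ n.factorial * (∑' k, hx (2 * a + b) k) ^ n *
      (∏ l ∈ Finset.range n, ((l.factorial : ℝ) ^ a)⁻¹) ^ 2 := by
  set S := ∑' k, hx (2 * a + b) k with hS
  set c : ℕ → ℝ := fun l => ((l.factorial : ℝ) ^ a)⁻¹ with hc
  have hc0 : ∀ l, 0 ≤ c l := fun l => by simp only [hc]; positivity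
  set P : Matrix (Fin n) (Fin n) ℝ := Matrix.of fun i j => (hp a j).coeff i with hP
  have hPdet : P.det = 1 := Matrix.det_matrixOfPolynomials (fun j : Fin n => hp a j)
    (fun i => hp_natDegree a i) (fun i => hp_monic a i)
  set G := P.transpose * hH a b n * P with hG
  have hdet : (hH a b n).det = G.det := by
    rw [hG, Matrix.det_mul, Matrix.det_mul, Matrix.det_transpose, hPdet]; ring
  have hent : ∀ l m, |G l m| ≤ S * (c l * c m) := by
    intro l m
    have h := hH_bilin ha hb n (fun i => P i l) (fun i => P i m)
    have e : ∑ i, ∑ j, P i l * hH a b n i j * P j m = G l m := by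
      rw [hG]
      simp only [Matrix.mul_apply, Matrix.transpose_apply, Finset.sum_mul]
      rw [Finset.sum_comm]
    rw [e] at h
    simp only [hP, Matrix.of_apply, hp_eval_sum] at h
    have hs := (hx_summable (s := 2 * a + b) (by omega)).hasSum.mul_right (c l * c m)
    rw [← Real.norm_eq_abs, ← h.tsum_eq]
    refine tsum_of_norm_bounded hs fun k => ?_
    rw [norm_mul, norm_mul, Real.norm_of_nonneg (hx_pos _ _).le]
    have e0 : hx a 0 = 1 := by simp [hx]
    have h1 := hp_eval_bound a l k
    have h2 := hp_eval_bound a m k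
    rw [e0, one_mul] at h1 h2
    refine mul_le_mul_of_nonneg_left ?_ (hx_pos _ _).le
    exact mul_le_mul h1 h2 (abs_nonneg _) (hc0 _)
  rw [hdet, Matrix.det_apply]
  refine (Finset.abs_sum_le_sum_abs _ _).trans ?_
  have hb : ∀ σ ∈ (Finset.univ : Finset (Equiv.Perm (Fin n))),
      |Equiv.Perm.sign σ • ∏ i, G (σ i) i| ≤ S ^ n * (∏ l ∈ Finset.range n, c l) ^ 2 := by
    intro σ _
    have e1 : |Equiv.Perm.sign σ • ∏ i, G (σ i) i| = ∏ i, |G (σ i) i| := by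
      rw [← Finset.abs_prod]
      rcases Int.units_eq_one_or (Equiv.Perm.sign σ) with h | h <;> simp [h]
    rw [e1]
    refine (Finset.prod_le_prod (fun _ _ => abs_nonneg _) fun i _ => hent (σ i) i).trans ?_
    rw [Finset.prod_mul_distrib, Finset.prod_mul_distrib,
      Equiv.prod_comp σ (fun i : Fin n => c i), Fin.prod_univ_eq_prod_range c n]
    simp [sq]
  refine (Finset.sum_le_card_nsmul _ _ _ hb).trans ?_
  simp [Fintype.card_perm, mul_assoc]

lemma zeta_det_norm {a b : ℕ} (ha : 0 < a) (hb : 0 < b) (n : ℕ) :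
    ‖Matrix.det (Matrix.of fun i j : Fin n =>
          riemannZeta ((a * ((i : ℕ) + (j : ℕ) + 2) + b : ℕ) : ℂ))‖ = |(hH a b n).det| := by
  have e : (Matrix.of fun i j : Fin n =>
          riemannZeta ((a * ((i : ℕ) + (j : ℕ) + 2) + b : ℕ) : ℂ)) =
      Complex.ofRealHom.mapMatrix (hH a b n) := by
    ext i j
    have hs : 1 < a * ((i : ℕ) + (j : ℕ) + 2) + b := by nlinarith [Nat.zero_le (i + j : ℕ)]
    simp only [Matrix.of_apply, RingHom.mapMatrix_apply, Matrix.map_apply, hH]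
    rw [zeta_nat_eq_tsum_of_gt_one hs]
    have : ∀ k : ℕ, hx (2 * a + b) k * (hx a k ^ (i : ℕ) * hx a k ^ (j : ℕ)) =
      (fun m : ℕ => 1 / (m : ℝ) ^ (a * ((i : ℕ) + (j : ℕ) + 2) + b)) (k + 1) := by
      intro k
      simp only [hx, one_div]
      push_cast
      rw [inv_pow, inv_pow, ← mul_inv, ← mul_inv, ← pow_mul, ← pow_mul, ← pow_add, ← pow_add]
      congr 2
      ring
    simp only [this]
    have hsum : Summable fun m : ℕ => 1 / (m : ℝ) ^ (a * ((i : ℕ) + (j : ℕ) + 2) + b) :=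
      Real.summable_one_div_nat_pow.2 hs
    have h1 := hsum.tsum_eq_zero_add
    have h0 : (1 : ℝ) / ((0 : ℕ) : ℝ) ^ (a * ((i : ℕ) + (j : ℕ) + 2) + b) = 0 := by
      rw [Nat.cast_zero, zero_pow (by omega), div_zero]
    rw [h0, zero_add] at h1
    rw [← h1]
    simp [Complex.ofReal_tsum]
  rw [e, ← RingHom.map_det]
  simp

lemma log_fact_ge (n m : ℕ) (hm : m < n) :
    (m : ℝ) * Real.log n - 2 * n ≤ Real.log (m.factorial : ℝ) := by
  have hn : (0 : ℝ) < n := by exact_mod_cast (by omega : 0 < n)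
  have hmn : (m : ℝ) ≤ n := by exact_mod_cast hm.le
  rcases Nat.eq_zero_or_pos m with rfl | h0
  · simp
  have hm0 : (0 : ℝ) < m := by exact_mod_cast h0
  have h1 : (m : ℝ) * Real.log m - m ≤ Real.log (m.factorial : ℝ) := by
    have h := Real.pow_div_factorial_le_exp (m : ℝ) hm0.le m
    have hf : (0 : ℝ) < m.factorial := by exact_mod_cast m.factorial_pos
    have h2 := Real.log_le_log (by positivity) h
    rw [Real.log_exp, Real.log_div (by positivity) hf.ne', Real.log_pow] at h2
    linarith
  have h2 : Real.log n - Real.log m ≤ n / m := by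
    rw [← Real.log_div hn.ne' hm0.ne']
    have := Real.log_le_sub_one_of_pos (show 0 < (n : ℝ) / m by positivity)
    linarith
  have h3 : (m : ℝ) * (Real.log n - Real.log m) ≤ n := by
    calc (m : ℝ) * (Real.log n - Real.log m) ≤ m * (n / m) := by gcongr
      _ = n := by field_simp
  linarith

end HankelAux

/-- For positive integers `a, b`, the Hankel determinant of zeta values satisfies
`log |det_{1≤i,j≤n} (ζ(a(i+j)+b))| ≤ -(a/2) n² log n + C' n²` for all sufficiently
large `n`. -/
theorem log_hankel_det_zeta_upper_bound
    (a b : ℕ) (ha : 0 < a) (hb : 0 < b) :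
    ∃ C' : ℝ, 0 < C' ∧ ∀ᶠ n : ℕ in Filter.atTop,
      Real.log ‖Matrix.det (Matrix.of fun i j : Fin n =>
          riemannZeta ((a * ((i : ℕ) + (j : ℕ) + 2) + b : ℕ) : ℂ))‖ ≤
        -((a : ℝ) / 2) * (n : ℝ) ^ 2 * Real.log n + C' * (n : ℝ) ^ 2 := by
  set S := ∑' k, hx (2 * a + b) k with hS
  have hS0 : 0 < S := (hx_summable (s := 2 * a + b) (by omega)).tsum_pos
    (fun k => (hx_pos _ k).le) 0 (hx_pos _ 0)
  refine ⟨1 + |Real.log S| + 4 * a, by positivity, ?_⟩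
  filter_upwards [Filter.eventually_ge_atTop 2] with n hn
  rw [zeta_det_norm ha hb]
  have hpos : 0 < |(hH a b n).det| := abs_pos.2 (hH_det_ne ha hb n)
  have h := Real.log_le_log hpos (hH_det_le ha hb n)
  have hn2 : (2 : ℝ) ≤ n := by exact_mod_cast hn
  have hf : (n.factorial : ℝ) ≠ 0 := by exact_mod_cast n.factorial_ne_zero
  have hc : ∀ l ∈ Finset.range n, ((l.factorial : ℝ) ^ a)⁻¹ ≠ 0 := fun l _ => by
    have : (0 : ℝ) < l.factorial := by exact_mod_cast l.factorial_pos
    positivity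
  have hc' := Finset.prod_ne_zero_iff.2 hc
  rw [← hS, Real.log_mul (mul_ne_zero hf (pow_pos hS0 n).ne') (pow_ne_zero _ hc'),
    Real.log_mul hf (pow_pos hS0 n).ne', Real.log_pow, Real.log_pow, Real.log_prod hc] at h
  simp only [Real.log_inv, Real.log_pow, Finset.sum_neg_distrib, ← Finset.mul_sum] at h
  have hL0 : 0 ≤ Real.log n := Real.log_nonneg (by linarith)
  have h1 : Real.log (n.factorial : ℝ) ≤ (n : ℝ) ^ 2 := by
    have h2 : (n.factorial : ℝ) ≤ (n : ℝ) ^ n := by exact_mod_cast n.factorial_le_pow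
    have h3 := Real.log_le_log (by positivity) h2
    rw [Real.log_pow] at h3
    have h4 : Real.log n ≤ n := (Real.log_le_sub_one_of_pos (by linarith)).trans (by linarith)
    nlinarith
  have h2 : (n : ℝ) * Real.log S ≤ |Real.log S| * (n : ℝ) ^ 2 := by
    have := le_abs_self (Real.log S)
    have h5 := abs_nonneg (Real.log S)
    calc (n : ℝ) * Real.log S ≤ n * |Real.log S| := by gcongr
      _ ≤ (n : ℝ) ^ 2 * |Real.log S| := by gcongr; nlinarith
      _ = _ := mul_comm _ _
  have h3 : (n : ℝ) * (n - 1) / 2 * Real.log n - 2 * n ^ 2 ≤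
      ∑ l ∈ Finset.range n, Real.log (l.factorial : ℝ) := by
    have h6 := Finset.sum_le_sum fun l (hl : l ∈ Finset.range n) =>
      log_fact_ge n l (Finset.mem_range.1 hl)
    refine le_trans (le_of_eq ?_) h6
    rw [Finset.sum_sub_distrib, ← Finset.sum_mul]
    have h7 : ∑ l ∈ Finset.range n, (l : ℝ) = (n : ℝ) * (n - 1) / 2 := by
      clear * -
      induction n with
      | zero => simp
      | succ k ih => rw [Finset.sum_range_succ, ih]; push_cast; ring
    rw [h7]
    simp
    ring
  have h4 : (n : ℝ) ^ 2 / 4 * Real.log n ≤ (n : ℝ) * (n - 1) / 2 * Real.log n := by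
    gcongr ?_ * _
    nlinarith
  have h5 : (a : ℝ) * ((n : ℝ) ^ 2 / 4 * Real.log n - 2 * n ^ 2) ≤
      a * ∑ l ∈ Finset.range n, Real.log (l.factorial : ℝ) := by
    gcongr
    linarith
  push_cast at h
  nlinarith
end

section
/- Let 2 ≤ n_1 < n_2 < n_3 < ⋯ be a strictly increasing sequence of integers such that ζ(n_m) is rational for every m. Then the Hankel determinants det_{1≤i,j≤n}(ζ(n_{i+j-1})) are nonzero for infinitely many n. -/
section HZ
open Polynomial Filter Topology Finset

noncomputable def hzL (a : ℕ → ℂ) : ℂ[X] →ₗ[ℂ] ℂ :=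
  Polynomial.lsum (fun i => a i • LinearMap.id)

lemma hzL_monomial (a : ℕ → ℂ) (i : ℕ) (c : ℂ) : hzL a (Polynomial.monomial i c) = c * a i := by
  simp [hzL, Polynomial.lsum_apply, mul_comm]

lemma hzL_mul (a : ℕ → ℂ) (q p : ℂ[X]) (D : ℕ) (h : q.natDegree < D) :
    hzL a (q * p) = ∑ i ∈ range D, q.coeff i * hzL a (X ^ i * p) := by
  conv_lhs => rw [q.as_sum_range' D h]
  rw [Finset.sum_mul, map_sum]
  refine Finset.sum_congr rfl fun i _ => ?_
  rw [← C_mul_X_pow_eq_monomial, mul_assoc, ← smul_eq_C_mul, map_smul, smul_eq_mul]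

lemma hzL_X (a : ℕ → ℂ) (r : ℕ) (p : ℂ[X]) (D : ℕ) (h : p.natDegree < D) :
    hzL a (X ^ r * p) = ∑ i ∈ range D, p.coeff i * a (r + i) := by
  rw [mul_comm, hzL_mul a p _ D h]
  refine Finset.sum_congr rfl fun i _ => ?_
  rw [← pow_add, X_pow_eq_monomial, hzL_monomial, one_mul, add_comm]

noncomputable def hzH (a : ℕ → ℂ) (N : ℕ) : Matrix (Fin N) (Fin N) ℂ :=
  Matrix.of fun i j : Fin N => a ((i : ℕ) + (j : ℕ))

noncomputable def hzP {N : ℕ} (v : Fin N → ℂ) : ℂ[X] := ∑ i : Fin N, monomial (i : ℕ) (v i)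

lemma hzP_coeff {N : ℕ} (v : Fin N → ℂ) (i : Fin N) : (hzP v).coeff i = v i := by
  simp [hzP, finsetSum_coeff, coeff_monomial, Fin.val_inj]

lemma hzP_degree {N : ℕ} (v : Fin N → ℂ) : (hzP v).degree < N := by
  unfold hzP
  refine (degree_sum_le _ _).trans_lt ?_
  rw [Finset.sup_lt_iff (by simp)]
  intro i _
  exact (degree_monomial_le _ _).trans_lt (by exact_mod_cast i.2)

lemma hzP_L (a : ℕ → ℂ) {N : ℕ} (v : Fin N → ℂ) (r : Fin N) :
    hzL a (X ^ (r : ℕ) * hzP v) = (hzH a N).mulVec v r := by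
  simp only [hzP, Finset.mul_sum, map_sum, Matrix.mulVec, dotProduct, hzH, Matrix.of_apply]
  refine Finset.sum_congr rfl fun i _ => ?_
  rw [X_pow_mul_monomial, hzL_monomial, mul_comm, add_comm]

lemma hz_kernel (a : ℕ → ℂ) (K : ℕ) (hK : (hzH a K).det ≠ 0) (R : ℂ[X]) (hR : R.degree < K)
    (h : ∀ r < K, hzL a (X ^ r * R) = 0) : R = 0 := by
  have hv : R = hzP (fun i : Fin K => R.coeff i) := by
    ext k
    by_cases hk : k < K
    · exact (hzP_coeff (fun i : Fin K => R.coeff i) ⟨k, hk⟩).symm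
    · rw [coeff_eq_zero_of_degree_lt, coeff_eq_zero_of_degree_lt]
      · exact (hzP_degree _).trans_le (by exact_mod_cast not_lt.1 hk)
      · exact hR.trans_le (by exact_mod_cast not_lt.1 hk)
  have h0 : (fun i : Fin K => R.coeff i) = 0 := by
    by_contra hne
    apply hK
    rw [← Matrix.exists_mulVec_eq_zero_iff]
    refine ⟨_, hne, ?_⟩
    ext r
    rw [← hzP_L, ← hv]
    exact h r r.2
  rw [hv, h0]
  simp [hzP]

lemma hz_kron (a : ℕ → ℂ) (h : {N : ℕ | (hzH a N).det ≠ 0}.Finite) :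
    ∃ C : ℂ[X], C.Monic ∧ ∀ m, hzL a (X ^ m * C) = 0 := by
  have h0 : (0 : ℕ) ∈ h.toFinset := by simp
  obtain ⟨K, hKm, hmax⟩ := Finset.exists_max_image h.toFinset id ⟨0, h0⟩
  have hK : (hzH a K).det ≠ 0 := by simpa using hKm
  have hbig : ∀ N, K < N → (hzH a N).det = 0 := by
    intro N hN
    by_contra hne
    exact absurd (hmax N (by simpa using hne)) (by simpa using hN)
  obtain ⟨w, hw⟩ := (Matrix.mulVec_surjective_iff_isUnit.2
    ((Matrix.isUnit_iff_isUnit_det _).2 hK.isUnit)) (fun r : Fin K => - a (r + K))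
  have hwd := hzP_degree w
  have hCm : (X ^ K + hzP w).Monic := monic_X_pow_add (by exact hwd)
  have hCd : (X ^ K + hzP w).degree = (K : WithBot ℕ) := by
    rw [degree_add_eq_left_of_degree_lt (by rwa [degree_X_pow]), degree_X_pow]
  have hCn : (X ^ K + hzP w).natDegree = K := natDegree_eq_of_degree_eq_some hCd
  refine ⟨X ^ K + hzP w, hCm, ?_⟩
  have hbase : ∀ r < K, hzL a (X ^ r * (X ^ K + hzP w)) = 0 := by
    intro r hr
    rw [mul_add, map_add, ← pow_add, X_pow_eq_monomial, hzL_monomial]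
    have := hzP_L a w ⟨r, hr⟩
    rw [hw] at this
    simp only at this
    rw [this]; simp
  generalize X ^ K + hzP w = C at *
  intro m
  induction m using Nat.strong_induction_on with
  | _ m ih =>
  by_cases hm : m < K
  · exact hbase m hm
  push Not at hm
  obtain ⟨v, hv0, hv⟩ := Matrix.exists_mulVec_eq_zero_iff.2 (hbig (m + 1) (by omega))
  have hV : ∀ r ≤ m, hzL a (X ^ r * hzP v) = 0 := by
    intro r hr
    have := hzP_L a v ⟨r, by omega⟩
    rw [hv] at this
    simpa using this
  have hVd := hzP_degree v
  have hVne : hzP v ≠ 0 := by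
    intro h
    apply hv0
    ext i
    rw [← hzP_coeff v i, h]; simp
  generalize hzP v = V at *
  have hdiv := modByMonic_add_div V C
  have hVn : V.natDegree ≤ m := by
    have := (natDegree_lt_iff_degree_lt hVne).2 hVd
    omega
  have hQd : (V /ₘ C).natDegree ≤ m - K := by
    rw [natDegree_divByMonic V hCm, hCn]; omega
  have hRd : (V %ₘ C).degree < K := hCd ▸ degree_modByMonic_lt V hCm
  generalize V /ₘ C = Q at *
  generalize V %ₘ C = R at *
  have key : ∀ r, r + Q.natDegree < m → hzL a (X ^ r * (C * Q)) = 0 := by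
    intro r hr
    rw [show X ^ r * (C * Q) = Q * (X ^ r * C) by ring, hzL_mul a Q _ (Q.natDegree + 1) (by omega)]
    refine Finset.sum_eq_zero fun i hi => ?_
    rw [mem_range] at hi
    rw [← mul_assoc, ← pow_add, ih _ (by omega), mul_zero]
  have hR0 : R = 0 := by
    refine hz_kernel a K hK R hRd fun r hr => ?_
    have h1 := hV r (by omega)
    rw [← hdiv, mul_add, map_add, key r (by omega), add_zero] at h1
    exact h1
  rw [hR0, zero_add] at hdiv
  have hQ0 : Q ≠ 0 := by
    rintro rfl
    exact hVne (by rw [← hdiv]; simp)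
  have h1 := hV (m - Q.natDegree) (by omega)
  rw [← hdiv, show X ^ (m - Q.natDegree) * (C * Q) = Q * (X ^ (m - Q.natDegree) * C) by ring,
    hzL_mul a Q _ (Q.natDegree + 1) (by omega), Finset.sum_range_succ, Finset.sum_eq_zero, zero_add,
    ← mul_assoc, ← pow_add, show Q.natDegree + (m - Q.natDegree) = m by omega] at h1
  · exact (mul_eq_zero.1 h1).resolve_left (by simpa using hQ0)
  · intro i hi
    rw [mem_range] at hi
    rw [← mul_assoc, ← pow_add, ih _ (by omega), mul_zero]

noncomputable def hzp (K : ℕ) (c : ℕ → ℂ) (e : ℕ → ℕ) (k : ℕ) : ℂ :=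
  if k = 0 then 0 else ∑ i ∈ range (K + 1), c i / (k : ℂ) ^ (e i)

lemma hzp_L (K : ℕ) (c : ℕ → ℂ) (e : ℕ → ℕ) (N : ℕ) (hN : 2 ≤ N) :
    LSeriesHasSum (hzp K c e) (N : ℂ) (∑ i ∈ range (K + 1), c i * riemannZeta ((N + e i : ℕ) : ℂ)) := by
  have h : ∀ i ∈ range (K + 1), HasSum (fun k : ℕ => c i * (1 / (k : ℂ) ^ (N + e i)))
      (c i * riemannZeta ((N + e i : ℕ) : ℂ)) := by
    intro i _
    rw [zeta_nat_eq_tsum_of_gt_one (by omega)]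
    refine (Summable.hasSum ?_).mul_left _
    refine Summable.of_norm ?_
    simpa using (Real.summable_nat_pow_inv (p := N + e i)).2 (by omega)
  have h2 := hasSum_sum h
  unfold LSeriesHasSum
  convert h2 using 2 with k
  rcases eq_or_ne k 0 with rfl | hk
  · symm
    simp only [LSeries.term_zero]
    refine Finset.sum_eq_zero fun i _ => ?_
    rw [Nat.cast_zero, zero_pow (by omega)]; simp
  · rw [LSeries.term_of_ne_zero hk, hzp, if_neg hk, Finset.sum_div, Complex.cpow_natCast]
    refine Finset.sum_congr rfl fun i _ => ?_
    have : (k : ℂ) ≠ 0 := by exact_mod_cast hk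
    rw [pow_add]; field_simp

lemma hz_tend (f : ℕ → ℂ) (N : ℕ) (h : ∀ m ≤ N, f m = 0) (s : ℂ) (hs : LSeriesSummable f s)
    (n : ℕ → ℕ) (hn : Tendsto n atTop atTop) :
    Tendsto (fun m => ((N : ℂ) + 1) ^ (n m) * LSeries f (n m : ℂ)) atTop (𝓝 (f (N + 1))) := by
  have h1 := LSeries.tendsto_cpow_mul_atTop h
    (hs.abscissaOfAbsConv_le.trans_lt (EReal.coe_lt_top _))
  have h2 := h1.comp (tendsto_natCast_atTop_atTop.comp hn)
  refine h2.congr fun m => ?_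
  simp [Complex.cpow_natCast]

lemma hz_delta (s : ℂ) : LSeriesSummable LSeries.delta s := by
  unfold LSeriesSummable
  refine summable_of_ne_finset_zero (s := {1}) fun k hk => ?_
  have : k ≠ 1 := by simpa using hk
  rcases eq_or_ne k 0 with rfl | hk0
  · simp
  · simp [LSeries.term_of_ne_zero hk0, LSeries.delta, this]

lemma hz_b (n : ℕ → ℕ) (hn : Tendsto n atTop atTop) :
    Tendsto (fun m => (2 : ℂ) ^ (n m) * (riemannZeta (n m : ℂ) - 1)) atTop (𝓝 1) := by
  have hsum : ∀ s : ℂ, 1 < s.re → LSeriesSummable ((1 : ℕ → ℂ) - LSeries.delta) s := fun s hs =>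
    (LSeriesSummable_one_iff.2 hs).sub (hz_delta s)
  have hval : ∀ s : ℂ, 1 < s.re → LSeries ((1 : ℕ → ℂ) - LSeries.delta) s = riemannZeta s - 1 := by
    intro s hs
    rw [LSeries_sub (LSeriesSummable_one_iff.2 hs) (hz_delta s),
      LSeries_one_eq_riemannZeta hs, LSeries_delta]; rfl
  set g : ℕ → ℂ := fun k => if k = 0 then 0 else ((1 : ℕ → ℂ) - LSeries.delta) k with hg
  have hc : ∀ {k : ℕ}, k ≠ 0 → g k = ((1 : ℕ → ℂ) - LSeries.delta) k := fun {k} hk => by simp [hg, hk]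
  have h := hz_tend g 1 (by
    intro m hm
    interval_cases m <;> simp [hg, LSeries.delta]) 2
    ((LSeriesSummable_congr 2 hc).2 (hsum 2 (by norm_num))) n hn
  have e : g (1 + 1) = 1 := by simp [hg, LSeries.delta]
  rw [e] at h
  refine h.congr' ?_
  filter_upwards [hn.eventually_ge_atTop 2] with m hm
  rw [LSeries_congr hc, hval _ (by simp; omega)]
  norm_num

lemma hz_final (n : ℕ → ℕ) (hn2 : 2 ≤ n 0) (hmono : StrictMono n) (K : ℕ) (c : ℕ → ℂ)
    (hc : c 0 ≠ 0)
    (h : ∀ m, ∑ i ∈ range (K + 1), c i * riemannZeta (n (m + i) : ℂ) = 0) : False := by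
  have hnt := hmono.tendsto_atTop
  have hu := hz_b n hnt
  set u : ℕ → ℂ := fun m => (2 : ℂ) ^ (n m) * (riemannZeta (n m : ℂ) - 1) with hudef
  have hzu : ∀ m, riemannZeta (n m : ℂ) = 1 + u m * (1 / 2) ^ (n m) := by
    intro m
    simp only [hudef]
    rw [one_div, inv_pow]; field_simp; ring
  have hz1 : Tendsto (fun m => riemannZeta (n m : ℂ)) atTop (𝓝 1) := by
    have h1 : Tendsto (fun k : ℕ => (1 / 2 : ℂ) ^ k) atTop (𝓝 0) :=
      tendsto_pow_atTop_nhds_zero_of_norm_lt_one (by norm_num)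
    have := (hu.mul (h1.comp hnt)).const_add 1
    simp only [mul_zero, add_zero] at this
    exact this.congr fun m => (hzu m).symm
  have hsum0 : ∑ i ∈ range (K + 1), c i = 0 := by
    have h1 : Tendsto (fun m => ∑ i ∈ range (K + 1), c i * riemannZeta (n (m + i) : ℂ)) atTop
        (𝓝 (∑ i ∈ range (K + 1), c i * 1)) :=
      tendsto_finsetSum _ fun i _ => (hz1.comp (tendsto_add_atTop_nat i)).const_mul _
    simp only [h, mul_one] at h1
    exact (tendsto_nhds_unique h1 tendsto_const_nhds)
  have hb : ∀ m, ∑ i ∈ range (K + 1), c i * (u (m + i) * (1 / 2) ^ (n (m + i))) = 0 := by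
    intro m
    have := h m
    simp only [hzu, mul_add, mul_one, Finset.sum_add_distrib, hsum0, zero_add] at this
    exact this
  have hmon : ∀ i j, i ≤ j → n i ≤ n j := fun i j hij => hmono.monotone hij
  have hun : Tendsto (fun m => ‖u m‖) atTop (𝓝 1) := by simpa using hu.norm
  obtain ⟨M, hM⟩ := eventually_atTop.1 ((hun.eventually (lt_mem_nhds (show (1/2 : ℝ) < 1 by norm_num))).and
    (hun.eventually (gt_mem_nhds (show (1 : ℝ) < 2 by norm_num))))
  set S : ℝ := ∑ i ∈ range K, ‖c (i + 1)‖ * 2 with hS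
  have hbound : ∀ m, M ≤ m → ‖c 0‖ * (1 / 2) * 2 ^ (n (m + 1) - n m) ≤ S := by
    intro m hm
    have h1 := hb m
    rw [Finset.sum_range_succ', add_eq_zero_iff_eq_neg'] at h1
    have h2 : ‖c 0‖ * (‖u m‖ * (1 / 2) ^ (n m)) ≤ S * (1 / 2) ^ (n (m + 1)) := by
      have h3 : ‖c 0 * (u (m + 0) * (1 / 2) ^ (n (m + 0)))‖ = ‖c 0‖ * (‖u m‖ * (1 / 2) ^ (n m)) := by
        simp
      rw [← h3, h1, norm_neg, hS, Finset.sum_mul]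
      refine (norm_sum_le _ _).trans (Finset.sum_le_sum fun i _ => ?_)
      rw [norm_mul, norm_mul, norm_pow, mul_assoc]
      have e2 : ‖(1 / 2 : ℂ)‖ = 1 / 2 := by norm_num
      rw [e2]
      have h5 := (hM (m + (i + 1)) (by omega)).2.le
      have h4 : (1 / 2 : ℝ) ^ (n (m + (i + 1))) ≤ (1 / 2) ^ (n (m + 1)) :=
        pow_le_pow_of_le_one (by norm_num) (by norm_num) (hmon _ _ (by omega))
      gcongr
    have h6 := (hM m hm).1.le
    obtain ⟨d, hd⟩ := Nat.exists_eq_add_of_le (hmon m (m + 1) (by omega))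
    rw [hd, Nat.add_sub_cancel_left]
    rw [hd, pow_add] at h2
    have hp : (0 : ℝ) < (1 / 2) ^ (n m) := by positivity
    have h7 : ‖c 0‖ * ‖u m‖ ≤ S * (1 / 2) ^ d := by
      refine le_of_mul_le_mul_right ?_ hp
      linarith
    calc ‖c 0‖ * (1 / 2) * 2 ^ d ≤ ‖c 0‖ * ‖u m‖ * 2 ^ d := by gcongr
      _ ≤ S * (1 / 2) ^ d * 2 ^ d := by gcongr
      _ = S := by rw [mul_assoc, ← mul_pow]; norm_num
  have hc0 : 0 < ‖c 0‖ := norm_pos_iff.2 hc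
  obtain ⟨B, hB⟩ : ∃ B : ℕ, ∀ m, M ≤ m → n (m + 1) - n m ≤ B := by
    obtain ⟨B, hB⟩ := pow_unbounded_of_one_lt (S / (‖c 0‖ * (1 / 2))) (show (1 : ℝ) < 2 by norm_num)
    refine ⟨B, fun m hm => ?_⟩
    by_contra hlt
    push Not at hlt
    have h1 := hbound m hm
    rw [div_lt_iff₀ (by positivity)] at hB
    have h2 : (2 : ℝ) ^ B ≤ 2 ^ (n (m + 1) - n m) := pow_le_pow_right₀ (by norm_num) hlt.le
    have h3 : (2 : ℝ) ^ B * (‖c 0‖ * (1 / 2)) ≤ 2 ^ (n (m + 1) - n m) * (‖c 0‖ * (1 / 2)) := by gcongr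
    linarith
  have hB2 : ∀ i m, M ≤ m → n (m + i) - n m ≤ i * B := by
    intro i m hm
    induction i with
    | zero => simp
    | succ i ih =>
      have := hB (m + i) (by omega)
      rw [add_assoc] at this
      rw [add_mul, one_mul]; omega
  let g : ℕ → (Fin (K + 1) → Fin (K * B + 1)) := fun m i =>
    ⟨n (m + M + i) - n (m + M), Nat.lt_succ_of_le ((hB2 i (m + M) (by omega)).trans
      (Nat.mul_le_mul_right _ (by omega)))⟩
  obtain ⟨e', he'⟩ := Finite.exists_infinite_fiber g
  let e : ℕ → ℕ := fun i => if hi : i < K + 1 then e' ⟨i, hi⟩ else 0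
  have hinf : (g ⁻¹' {e'}).Infinite := Set.infinite_coe_iff.1 he'
  obtain ⟨φ, hφm, hφ⟩ : ∃ φ : ℕ → ℕ, StrictMono φ ∧ ∀ t, g (φ t) = e' :=
    ⟨_, Nat.nth_strictMono hinf, fun t => Nat.nth_mem_of_infinite hinf t⟩
  have hee : ∀ t, ∀ i ∈ range (K + 1), n (φ t + M + i) = n (φ t + M) + e i := by
    intro t i hi
    rw [mem_range] at hi
    have h1 := congrArg Fin.val (congrFun (hφ t) ⟨i, hi⟩)
    simp only [g] at h1
    simp only [e, dif_pos hi]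
    have := hmon (φ t + M) (φ t + M + i) (by omega)
    omega
  have hL : ∀ t, LSeries (hzp K c e) (n (φ t + M) : ℂ) = 0 := by
    intro t
    rw [(hzp_L K c e _ (hn2.trans (hmon _ _ (by omega)))).LSeries_eq, ← h (φ t + M)]
    exact Finset.sum_congr rfl fun i hi => by rw [hee t i hi]
  have hp0 : ∀ k, hzp K c e k = 0 := by
    intro k
    induction k using Nat.strong_induction_on with
    | _ k ih =>
    rcases k with _ | k
    · simp [hzp]
    have ht := hz_tend (hzp K c e) k (fun m hm => ih m (by omega)) _
      (hzp_L K c e 2 le_rfl).LSeriesSummable (fun t => n (φ t + M))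
      (hnt.comp ((tendsto_add_atTop_nat M).comp hφm.tendsto_atTop))
    simp only [hL, mul_zero] at ht
    exact (tendsto_nhds_unique ht tendsto_const_nhds)
  have he0 : e 0 = 0 := by
    have := hee 0 0 (by simp)
    simpa using this
  have hepos : ∀ i ∈ range K, e (i + 1) ≠ 0 := by
    intro i hi
    rw [mem_range] at hi
    have := hee 0 (i + 1) (by simp; omega)
    have h2 : n (φ 0 + M) < n (φ 0 + M + (i + 1)) := hmono (by omega)
    omega
  have hlim : Tendsto (fun k : ℕ => (∑ i ∈ range K, c (i + 1) / (k : ℂ) ^ (e (i + 1))) + c 0) atTop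
      (𝓝 ((∑ i ∈ range K, (0 : ℂ)) + c 0)) := by
    refine (tendsto_finsetSum _ fun i hi => ?_).add_const _
    have h1 : Tendsto (fun k : ℕ => ((k : ℂ)⁻¹) ^ (e (i + 1))) atTop (𝓝 0) := by
      have := (tendsto_inv_atTop_nhds_zero_nat (𝕜 := ℂ)).pow (e (i + 1))
      rwa [zero_pow (hepos i hi)] at this
    have := h1.const_mul (c (i + 1))
    rw [mul_zero] at this
    exact this.congr fun k => by rw [inv_pow, div_eq_mul_inv]
  have hlim0 : Tendsto (fun k : ℕ => (∑ i ∈ range K, c (i + 1) / (k : ℂ) ^ (e (i + 1))) + c 0) atTop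
      (𝓝 0) := by
    refine tendsto_const_nhds.congr' ?_
    filter_upwards [eventually_gt_atTop 0] with k hk
    rw [← hp0 k, hzp, if_neg (by omega), Finset.sum_range_succ', he0]; simp
  have := tendsto_nhds_unique hlim hlim0
  simp at this
  exact hc this

lemma hz_main (n : ℕ → ℕ) (hn2 : 2 ≤ n 0) (hmono : StrictMono n)
    (h : {N : ℕ | (hzH (fun m => riemannZeta (n m : ℂ)) N).det ≠ 0}.Finite) : False := by
  obtain ⟨C, hC, hL⟩ := hz_kron _ h
  have hd : ∀ m, ∑ i ∈ range (C.natTrailingDegree + (C.natDegree + 1)),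
      C.coeff i * riemannZeta (n (m + i) : ℂ) = 0 := fun m => by
    rw [← hL m, hzL_X _ m C (C.natTrailingDegree + (C.natDegree + 1)) (by omega)]
  refine hz_final (fun m => n (m + C.natTrailingDegree)) (hn2.trans (hmono.monotone (by simp)))
    (fun a b hab => hmono (by omega)) C.natDegree (fun i => C.coeff (C.natTrailingDegree + i)) ?_ ?_
  · simpa using hC.ne_zero
  · intro m
    have := hd m
    rw [Finset.sum_range_add, Finset.sum_eq_zero, zero_add] at this
    · rw [← this]
      refine Finset.sum_congr rfl fun i _ => ?_
      rw [show m + i + C.natTrailingDegree = m + (C.natTrailingDegree + i) by omega]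
    · intro i hi
      rw [coeff_eq_zero_of_lt_natTrailingDegree (mem_range.1 hi), zero_mul]

end HZ

/-- **Lemma 4** (Haynes–Zudilin). Let `n 0 < n 1 < ⋯` be a strictly increasing sequence
of integers with `n 0 ≥ 2` (so `n m` is the paper's `n_{m+1}`) such that every `ζ(n m)`
is rational. Then the Hankel determinants `det_{1≤i,j≤N} (ζ(n_{i+j-1}))` are nonzero for
infinitely many `N`. With the zero-based indexing here, the `(i,j)` entry of the `N × N`
matrix is `ζ(n (i+j))` for `i, j : Fin N`. -/
theorem hankel_det_zeta_values_ne_zero_infinitely_often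
    (n : ℕ → ℕ) (hn2 : 2 ≤ n 0) (hmono : StrictMono n)
    (hrat : ∀ m : ℕ, ∃ q : ℚ, riemannZeta ((n m : ℕ) : ℂ) = (q : ℂ)) :
    {N : ℕ | Matrix.det (Matrix.of fun i j : Fin N =>
        riemannZeta ((n ((i : ℕ) + (j : ℕ)) : ℕ) : ℂ)) ≠ 0}.Infinite := by
  intro h
  exact hz_main n hn2 hmono h
end

section
/- For any positive integers a and b and every n ≥ 1, the Hankel determinant det_{1≤i,j≤n}(ζ(a(i+j-1)+b)) is strictly positive. -/
theorem hankel_det_zeta_aux (a b : ℕ) (ha : 0 < a) (hb : 0 < b) (n : ℕ) :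
    (Matrix.of fun i j : Fin n =>
      ∑' m : ℕ, 1 / (m : ℝ) ^ (a * ((i : ℕ) + (j : ℕ) + 1) + b)).PosDef := by
  refine Matrix.PosDef.of_dotProduct_mulVec_pos ?_ ?_
  · ext i j
    simp [Matrix.conjTranspose_apply, add_comm (i : ℕ) (j : ℕ)]
  intro x hx
  have hs : ∀ i j : Fin n, HasSum (fun m : ℕ => x i * ((1 / (m : ℝ) ^ (a * ((i : ℕ) + (j : ℕ) + 1) + b)) * x j))
      (x i * ((∑' m : ℕ, 1 / (m : ℝ) ^ (a * ((i : ℕ) + (j : ℕ) + 1) + b)) * x j)) := by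
    intro i j
    refine HasSum.mul_left _ (HasSum.mul_right _ (Summable.hasSum ?_))
    rw [Real.summable_one_div_nat_pow]
    have : 0 < a * ((i : ℕ) + (j : ℕ) + 1) := by positivity
    omega
  have H := hasSum_sum (s := Finset.univ) fun i _ => hasSum_sum (s := Finset.univ) fun j _ => hs i j
  have e : star x ⬝ᵥ ((Matrix.of fun i j : Fin n =>
      ∑' m : ℕ, 1 / (m : ℝ) ^ (a * ((i : ℕ) + (j : ℕ) + 1) + b)).mulVec x) =
      ∑ i : Fin n, ∑ j : Fin n, (x i * ((∑' m : ℕ, 1 / (m : ℝ) ^ (a * ((i : ℕ) + (j : ℕ) + 1) + b)) * x j)) := by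
    simp only [dotProduct, Matrix.mulVec, Matrix.of_apply, Finset.mul_sum, Pi.star_apply, star_trivial]
  rw [e]
  have key : ∀ m : ℕ, ∑ i : Fin n, ∑ j : Fin n,
      x i * ((1 / (m : ℝ) ^ (a * ((i : ℕ) + (j : ℕ) + 1) + b)) * x j) =
      (1 / (m : ℝ) ^ (a + b)) * (∑ i : Fin n, (1 / (m : ℝ) ^ a) ^ (i : ℕ) * x i) ^ 2 := by
    intro m
    rw [sq, Finset.sum_mul_sum, Finset.mul_sum]
    refine Finset.sum_congr rfl fun i _ => ?_
    rw [Finset.mul_sum]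
    refine Finset.sum_congr rfl fun j _ => ?_
    have : (m : ℝ) ^ (a * ((i : ℕ) + (j : ℕ) + 1) + b) =
      (m : ℝ) ^ (a + b) * ((m : ℝ) ^ a) ^ (i : ℕ) * ((m : ℝ) ^ a) ^ (j : ℕ) := by
      rw [← pow_mul, ← pow_mul, ← pow_add, ← pow_add]; congr 1; ring
    rw [this]
    simp only [one_div, mul_inv, inv_pow]
    ring
  simp only [key] at H
  rw [← H.tsum_eq]
  have hex : ∃ k : Fin n, (∑ i : Fin n, (1 / (((k : ℕ) + 1 : ℕ) : ℝ) ^ a) ^ (i : ℕ) * x i) ≠ 0 := by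
    by_contra! h
    refine hx (Matrix.eq_zero_of_forall_index_sum_pow_mul_eq_zero
      (f := fun k : Fin n => 1 / (((k : ℕ) + 1 : ℕ) : ℝ) ^ a) ?_ h)
    intro k l hkl
    simp only [one_div, inv_inj] at hkl
    have := (pow_left_inj₀ (by positivity) (by positivity) ha.ne').1 hkl
    have := Nat.cast_injective this
    ext; omega
  obtain ⟨k, hk⟩ := hex
  refine H.summable.tsum_pos (fun m => by positivity) ((k : ℕ) + 1) ?_
  positivity

/-- For positive integers `a, b` and every `n ≥ 1`, the Hankel determinant
`det_{1≤i,j≤n} (ζ(a(i+j-1)+b))` is a strictly positive real number. With zero-based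
indexing `i, j : Fin n`, the `(i,j)` entry is `ζ(a(i+j+1)+b)`. -/
theorem hankel_det_zeta_progression_pos
    (a b : ℕ) (ha : 0 < a) (hb : 0 < b) (n : ℕ) (hn : 1 ≤ n) :
    ∃ d : ℝ, Matrix.det (Matrix.of fun i j : Fin n =>
        riemannZeta ((a * ((i : ℕ) + (j : ℕ) + 1) + b : ℕ) : ℂ)) = (d : ℂ) ∧ 0 < d := by
  refine ⟨_, ?_, (hankel_det_zeta_aux a b ha hb n).det_pos⟩
  have := RingHom.map_det Complex.ofRealHom (Matrix.of fun i j : Fin n =>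
      ∑' m : ℕ, 1 / (m : ℝ) ^ (a * ((i : ℕ) + (j : ℕ) + 1) + b))
  rw [Complex.ofRealHom_eq_coe] at this
  rw [this]
  congr 1
  ext i j
  have h0 : 0 < a * ((i : ℕ) + (j : ℕ) + 1) := by positivity
  rw [Matrix.of_apply, zeta_nat_eq_tsum_of_gt_one (by omega)]
  simp only [RingHom.mapMatrix_apply, Matrix.map_apply, Matrix.of_apply, Complex.ofRealHom_eq_coe,
    Complex.ofReal_tsum]
  push_cast
  rfl
end
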